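/- arXiv:1910.13469 — 2 statements merged into one kernel-verified Lean document; each statement's English description precedes it below -/
import Mathlib

section
/- Let 0 < β < 1. If x, x′, m, m′ ∈ ℝ satisfy m = tanh(β·(x + m)) and m′ = tanh(β·(x′ + m′)), then |m − m′| ≤ (β/(1 − β))·|x − x′|. In particular, the unique function φ : ℝ → ℝ with φ(x) = tanh(β(x + φ(x))) for all x is Lipschitz continuous with Lipschitz constant β/(1 − β). -/
/-!
The function `tanh` is firmly nonexpansive: `(tanh a - tanh b)² ≤ (tanh a - tanh b) (a - b)`,
because its derivative `1 - tanh²` lies in `[0, 1]`. With `d = m - m'` and `δ = x - x'`, applying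
this at `a = β (x + m)` and `b = β (x' + m')` gives `d² ≤ β d (δ + d)`, hence
`(1 - β) d² ≤ β d δ ≤ |β| |d| |δ|`, and one factor `|d|` cancels.
-/

open scoped RealInnerProductSpace

section FirmlyNonexpansive

variable {E : Type*} [SeminormedAddCommGroup E] [InnerProductSpace ℝ E] {f : E → E}

/-- Firm nonexpansiveness in the sense of convex analysis. On `ℝ` it says that all difference
quotients of `f` lie in `[0, 1]`; unlike the bare Lipschitz bound, it retains the sign of
`f a - f b`. -/
def FirmlyNonexpansive (f : E → E) : Prop :=
  ∀ a b, ‖f a - f b‖ ^ 2 ≤ ⟪f a - f b, a - b⟫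

theorem FirmlyNonexpansive.norm_sub_le_of_eq_apply_smul_add (hf : FirmlyNonexpansive f) {β : ℝ}
    (hβ : β < 1) {x x' m m' : E} (hm : m = f (β • (x + m))) (hm' : m' = f (β • (x' + m'))) :
    ‖m - m'‖ ≤ |β| / (1 - β) * ‖x - x'‖ := by
  have firm : ‖m - m'‖ ^ 2 ≤ ⟪m - m', β • (x + m) - β • (x' + m')⟫ := by
    simpa only [← hm, ← hm'] using hf (β • (x + m)) (β • (x' + m'))
  have expand : ⟪m - m', β • (x + m) - β • (x' + m')⟫ =
      β * ⟪m - m', x - x'⟫ + β * ‖m - m'‖ ^ 2 := by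
    rw [← smul_sub, add_sub_add_comm, inner_smul_right, inner_add_right,
      real_inner_self_eq_norm_sq, mul_add]
  have cauchy_schwarz : β * ⟪m - m', x - x'⟫ ≤ |β| * (‖m - m'‖ * ‖x - x'‖) := by
    grw [le_abs_self (β * _), abs_mul, abs_real_inner_le_norm]
  have cancelled : (1 - β) * ‖m - m'‖ ≤ |β| * ‖x - x'‖ := by
    rcases (norm_nonneg (m - m')).eq_or_lt' with hd | hd
    · rw [hd, mul_zero]
      positivity
    · refine le_of_mul_le_mul_right ?_ hd
      linarith
  rwa [div_mul_eq_mul_div, le_div_iff₀' (sub_pos.2 hβ)]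

end FirmlyNonexpansive

theorem firmlyNonexpansive_of_monotone {f : ℝ → ℝ} (hf : Monotone f)
    (hsub : Monotone fun x ↦ x - f x) : FirmlyNonexpansive f := by
  intro a b
  have product_nonneg : 0 ≤ (f a - f b) * ((a - f a) - (b - f b)) :=
    monovary_iff_forall_mul_nonneg.1 (hf.monovary hsub) b a
  rw [Real.norm_eq_abs, sq_abs, RCLike.inner_apply', conj_trivial]
  linarith

theorem hasDerivAt_tanh (x : ℝ) : HasDerivAt Real.tanh (1 - Real.tanh x ^ 2) x := by
  have hcosh : Real.cosh x ≠ 0 := (Real.cosh_pos x).ne'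
  have quotient_rule_eq : (Real.cosh x * Real.cosh x - Real.sinh x * Real.sinh x) /
      Real.cosh x ^ 2 = 1 - Real.tanh x ^ 2 := by
    rw [Real.tanh_eq_sinh_div_cosh]
    field_simp
  simpa only [← Real.tanh_eq_sinh_div_cosh, quotient_rule_eq] using
    (Real.hasDerivAt_sinh x).fun_div (Real.hasDerivAt_cosh x) hcosh

theorem firmlyNonexpansive_tanh : FirmlyNonexpansive Real.tanh := by
  refine firmlyNonexpansive_of_monotone
    (monotone_of_hasDerivAt_nonneg hasDerivAt_tanh fun x ↦ ?_)
    (monotone_of_hasDerivAt_nonneg (fun x ↦ (hasDerivAt_id' x).sub (hasDerivAt_tanh x)) fun x ↦ ?_)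
  · exact sub_nonneg.2 (Real.tanh_sq_lt_one x).le
  · exact (sq_nonneg (Real.tanh x)).trans_eq (sub_sub_cancel 1 _).symm

theorem invariant_curve_lipschitz_general (β : ℝ) (h1 : β < 1) :
    (∀ x x' m m' : ℝ, m = Real.tanh (β * (x + m)) → m' = Real.tanh (β * (x' + m')) →
      |m - m'| ≤ |β| / (1 - β) * |x - x'|) ∧
    (∀ φ : ℝ → ℝ, (∀ x, φ x = Real.tanh (β * (x + φ x))) →
      ∀ x x', |φ x - φ x'| ≤ |β| / (1 - β) * |x - x'|) := by
  have curve_bound (x x' m m' : ℝ) (hm : m = Real.tanh (β * (x + m)))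
      (hm' : m' = Real.tanh (β * (x' + m'))) : |m - m'| ≤ |β| / (1 - β) * |x - x'| :=
    firmlyNonexpansive_tanh.norm_sub_le_of_eq_apply_smul_add h1 hm hm'
  exact ⟨curve_bound, fun φ hφ x x' ↦ curve_bound x x' (φ x) (φ x') (hφ x) (hφ x')⟩

/-- Subcritical case 0 < β < 1: any two points on the invariant curve m = tanh(β(x + m))
satisfy |m − m′| ≤ (β/(1−β))·|x − x′|; in particular the unique solution φ of
φ(x) = tanh(β(x + φ(x))) is Lipschitz with constant β/(1−β). -/
theorem invariant_curve_lipschitz (β : ℝ) (h0 : 0 < β) (h1 : β < 1) :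
    (∀ x x' m m' : ℝ, m = Real.tanh (β * (x + m)) → m' = Real.tanh (β * (x' + m')) →
      |m - m'| ≤ β / (1 - β) * |x - x'|) ∧
    (∀ φ : ℝ → ℝ, (∀ x, φ x = Real.tanh (β * (x + φ x))) →
      ∀ x x', |φ x - φ x'| ≤ β / (1 - β) * |x - x'|) := by
  simpa only [abs_of_pos h0] using invariant_curve_lipschitz_general β h1
end

section
/- Let β > 1, m_a := √(1 − 1/β), λ_a := (1/β)·artanh(√(1 − 1/β)), and define g : (−1,1) → ℝ by g(y) := 2βy − 2β(m_a − λ_a) − log(1+y) + log(1−y), and let m_b be the unique zero of g in (−1,1) distinct from m_a. Then g(y) > 0 for all y ∈ (−1, m_b), g(y) < 0 for all y ∈ (m_b, m_a), g(m_a) = 0, and g(y) < 0 for all y ∈ (m_a, 1); in particular g(y) < 0 for every y ∈ [0,1) with y ≠ m_a. -/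
/-- Inverse hyperbolic tangent: artanh(y) = (1/2)·log((1+y)/(1−y)). -/
noncomputable def artanh (y : ℝ) : ℝ := (1/2) * Real.log ((1 + y) / (1 - y))

/-- The critical ordinate m_a(β) = √(1 − 1/β). -/
noncomputable def mCrit (β : ℝ) : ℝ := Real.sqrt (1 - 1/β)

/-- The critical abscissa λ_a(β) = (1/β)·artanh(√(1 − 1/β)). -/
noncomputable def lCrit (β : ℝ) : ℝ := (1/β) * artanh (Real.sqrt (1 - 1/β))

/-- The function g(y) = 2βy − 2β(m_a − λ_a) − log(1+y) + log(1−y). -/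
noncomputable def gJump (β : ℝ) (y : ℝ) : ℝ :=
  2 * β * y - 2 * β * (mCrit β - lCrit β) - Real.log (1 + y) + Real.log (1 - y)

/-!
On `(-1, 1)` the derivative is `g'(y) = 2β - 2 / (1 - y²) = 2β (m_a² - y²) / (1 - y²)`, because
`β (1 - m_a²) = 1`. Hence `g` decreases up to `-m_a`, increases on `[-m_a, m_a]` and decreases
afterwards. As `g(m_a) = 0`, `g` is negative on `[-m_a, 1)` away from `m_a`, so a second zero lies
to the left of `-m_a`, where `g` is strictly decreasing.
-/

lemma two_mul_artanh {y : ℝ} (hy : |y| < 1) :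
    2 * artanh y = Real.log (1 + y) - Real.log (1 - y) := by
  obtain ⟨hy₁, hy₂⟩ := abs_lt.mp hy
  rw [artanh, Real.log_div (by linarith) (by linarith)]
  ring

section CriticalPoint

variable {β : ℝ}

lemma mCrit_nonneg : 0 ≤ mCrit β :=
  Real.sqrt_nonneg _

lemma mCrit_lt_one (hβ : 0 < β) : mCrit β < 1 :=
  (Real.sqrt_lt' one_pos).mpr (by simpa using hβ)

lemma mul_one_sub_mCrit_sq (hβ : 1 ≤ β) : β * (1 - mCrit β ^ 2) = 1 := by
  have hβ₀ : 0 < β := by linarith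
  rw [mCrit, Real.sq_sqrt (sub_nonneg.mpr ((div_le_one hβ₀).mpr hβ)), sub_sub_cancel,
    mul_one_div_cancel hβ₀.ne']

lemma mul_lCrit (hβ : β ≠ 0) : β * lCrit β = artanh (mCrit β) := by
  rw [lCrit, ← mul_assoc, mul_one_div_cancel hβ, one_mul, mCrit]

lemma gJump_mCrit (hβ : 0 < β) : gJump β (mCrit β) = 0 := by
  have h_abs : |mCrit β| < 1 := by
    simpa only [abs_of_nonneg mCrit_nonneg] using mCrit_lt_one hβ
  unfold gJump
  linear_combination 2 * mul_lCrit hβ.ne' + two_mul_artanh h_abs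

end CriticalPoint

section Derivative

variable {β y : ℝ}

lemma hasDerivAt_gJump (hy : |y| < 1) :
    HasDerivAt (gJump β) (2 * β - 2 / (1 - y ^ 2)) y := by
  obtain ⟨hy₁, hy₂⟩ := abs_lt.mp hy
  have h_add : 1 + y ≠ 0 := by linarith
  have h_sub : 1 - y ≠ 0 := by linarith
  have h_linear := ((hasDerivAt_id' y).const_mul (2 * β)).sub_const (2 * β * (mCrit β - lCrit β))
  have h_log_add := ((hasDerivAt_id' y).const_add 1).log h_add
  have h_log_sub := ((hasDerivAt_id' y).const_sub 1).log h_sub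
  refine ((h_linear.sub h_log_add).add h_log_sub).congr_deriv ?_
  rw [show 1 - y ^ 2 = (1 + y) * (1 - y) by ring]
  field_simp
  ring

lemma continuousOn_gJump : ContinuousOn (gJump β) (Set.Ioo (-1) 1) :=
  fun _ hy => (hasDerivAt_gJump (abs_lt.mpr hy)).continuousAt.continuousWithinAt

lemma deriv_gJump (hβ : 1 ≤ β) (hy : |y| < 1) :
    deriv (gJump β) y = 2 * β * (mCrit β ^ 2 - y ^ 2) / (1 - y ^ 2) := by
  have h_den : 1 - y ^ 2 ≠ 0 := (sub_pos.mpr ((sq_lt_one_iff_abs_lt_one y).mpr hy)).ne'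
  rw [(hasDerivAt_gJump hy).deriv, eq_div_iff h_den, sub_mul, div_mul_cancel₀ _ h_den]
  linear_combination 2 * mul_one_sub_mCrit_sq hβ

lemma deriv_gJump_pos (hβ : 1 ≤ β) (hy : |y| < mCrit β) : 0 < deriv (gJump β) y := by
  have hy₁ : |y| < 1 := hy.trans (mCrit_lt_one (by linarith))
  have h_den : 0 < 1 - y ^ 2 := sub_pos.mpr ((sq_lt_one_iff_abs_lt_one y).mpr hy₁)
  have h_num : 0 < mCrit β ^ 2 - y ^ 2 := sub_pos.mpr (sq_lt_sq.mpr (hy.trans_le (le_abs_self _)))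
  rw [deriv_gJump hβ hy₁]
  positivity

lemma deriv_gJump_neg (hβ : 1 ≤ β) (hy : mCrit β < |y|) (hy₁ : |y| < 1) :
    deriv (gJump β) y < 0 := by
  have h_den : 0 < 1 - y ^ 2 := sub_pos.mpr ((sq_lt_one_iff_abs_lt_one y).mpr hy₁)
  have h_num : mCrit β ^ 2 - y ^ 2 < 0 :=
    sub_neg.mpr (sq_lt_sq.mpr (by rwa [abs_of_nonneg mCrit_nonneg]))
  rw [deriv_gJump hβ hy₁]
  exact div_neg_of_neg_of_pos (mul_neg_of_pos_of_neg (by linarith) h_num) h_den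

end Derivative

section Monotonicity

variable {β : ℝ}

lemma strictAntiOn_gJump_Ioc (hβ : 1 ≤ β) :
    StrictAntiOn (gJump β) (Set.Ioc (-1) (-mCrit β)) := by
  have h_nonneg : 0 ≤ mCrit β := mCrit_nonneg
  refine strictAntiOn_of_deriv_neg (convex_Ioc _ _)
    (continuousOn_gJump.mono (Set.Ioc_subset_Ioo_right (by linarith))) fun y hy => ?_
  obtain ⟨hy₁, hy₂⟩ := interior_Ioc (α := ℝ) ▸ hy
  exact deriv_gJump_neg hβ (lt_abs.mpr (Or.inr (by linarith)))
    (abs_lt.mpr ⟨hy₁, by linarith⟩)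

lemma strictMonoOn_gJump_Icc (hβ : 1 ≤ β) :
    StrictMonoOn (gJump β) (Set.Icc (-mCrit β) (mCrit β)) := by
  have h_lt_one : mCrit β < 1 := mCrit_lt_one (by linarith)
  refine strictMonoOn_of_deriv_pos (convex_Icc _ _)
    (continuousOn_gJump.mono (Set.Icc_subset_Ioo (by linarith) h_lt_one)) fun y hy => ?_
  rw [interior_Icc] at hy
  exact deriv_gJump_pos hβ (abs_lt.mpr hy)

lemma strictAntiOn_gJump_Ico (hβ : 1 ≤ β) :
    StrictAntiOn (gJump β) (Set.Ico (mCrit β) 1) := by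
  have h_nonneg : 0 ≤ mCrit β := mCrit_nonneg
  refine strictAntiOn_of_deriv_neg (convex_Ico _ _)
    (continuousOn_gJump.mono (Set.Ico_subset_Ioo_left (by linarith))) fun y hy => ?_
  obtain ⟨hy₁, hy₂⟩ := interior_Ico (α := ℝ) ▸ hy
  exact deriv_gJump_neg hβ (lt_abs.mpr (Or.inl hy₁)) (abs_lt.mpr ⟨by linarith, hy₂⟩)

end Monotonicity

section Sign

variable {β y : ℝ}

lemma gJump_neg_of_neg_mCrit_le (hβ : 1 ≤ β) (hy : -mCrit β ≤ y) (hy₁ : y < 1)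
    (hne : y ≠ mCrit β) : gJump β y < 0 := by
  have hβ₀ : 0 < β := by linarith
  rw [← gJump_mCrit hβ₀]
  rcases hne.lt_or_gt with h_lt | h_gt
  · exact strictMonoOn_gJump_Icc hβ ⟨hy, h_lt.le⟩ ⟨hy.trans h_lt.le, le_rfl⟩ h_lt
  · exact strictAntiOn_gJump_Ico hβ ⟨le_rfl, mCrit_lt_one hβ₀⟩ ⟨h_gt.le, hy₁⟩ h_gt

lemma lt_neg_mCrit_of_gJump_eq_zero (hβ : 1 ≤ β) (hy₁ : y < 1) (hne : y ≠ mCrit β)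
    (hzero : gJump β y = 0) : y < -mCrit β := by
  by_contra! hy
  exact (gJump_neg_of_neg_mCrit_le hβ hy hy₁ hne).ne hzero

end Sign

/-- For β > 1, with m_b the unique zero of g in (−1,1) distinct from m_a:
g > 0 on (−1, m_b), g < 0 on (m_b, m_a), g(m_a) = 0, g < 0 on (m_a, 1);
in particular g(y) < 0 for every y ∈ [0,1) with y ≠ m_a. -/
theorem gJump_sign_pattern (β : ℝ) (hβ : 1 < β) (m_b : ℝ)
    (hmb : m_b ∈ Set.Ioo (-1 : ℝ) 1) (hne : m_b ≠ mCrit β) (hzero : gJump β m_b = 0)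
    (huniq : ∀ y ∈ Set.Ioo (-1 : ℝ) 1, y ≠ mCrit β → gJump β y = 0 → y = m_b) :
    (∀ y ∈ Set.Ioo (-1 : ℝ) m_b, 0 < gJump β y) ∧
    (∀ y ∈ Set.Ioo m_b (mCrit β), gJump β y < 0) ∧
    gJump β (mCrit β) = 0 ∧
    (∀ y ∈ Set.Ioo (mCrit β) 1, gJump β y < 0) ∧
    (∀ y ∈ Set.Ico (0 : ℝ) 1, y ≠ mCrit β → gJump β y < 0) := by
  have h_neg {y : ℝ} := gJump_neg_of_neg_mCrit_le (y := y) hβ.le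
  have h_anti := strictAntiOn_gJump_Ioc hβ.le
  have h_nonneg : 0 ≤ mCrit β := mCrit_nonneg
  have h_lt_one : mCrit β < 1 := mCrit_lt_one (by linarith)
  have hmb_lt : m_b < -mCrit β := lt_neg_mCrit_of_gJump_eq_zero hβ.le hmb.2 hne hzero
  have hmb_mem : m_b ∈ Set.Ioc (-1) (-mCrit β) := ⟨hmb.1, hmb_lt.le⟩
  refine ⟨fun y hy => ?_, fun y hy => ?_, gJump_mCrit (by linarith), fun y hy => ?_,
    fun y hy hy_ne => ?_⟩
  · exact hzero ▸ h_anti ⟨hy.1, (hy.2.trans hmb_lt).le⟩ hmb_mem hy.2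
  · rcases le_total y (-mCrit β) with h_left | h_right
    · exact hzero ▸ h_anti hmb_mem ⟨hmb.1.trans hy.1, h_left⟩ hy.1
    · exact h_neg h_right (hy.2.trans h_lt_one) hy.2.ne
  · exact h_neg (by linarith [hy.1]) hy.2 hy.1.ne'
  · exact h_neg (by linarith [hy.1]) hy.2 hy_ne
end
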